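/- arXiv:1107.3900 — 4 statements merged into one kernel-verified Lean document; each statement's English description precedes it below -/
import Mathlib

section
/- Let R be a commutative ring which is a ℚ-algebra, let D : R → R be a derivation (an additive map satisfying D(xy) = D(x)y + xD(y)), let g ∈ R, and let n₁, n₂ be positive integers with n₂ ≤ n₁. Then for every natural number N with N ≤ 2n₂ − 1 there exist elements A, B ∈ R such that D^[N](g^{n₂}) · g^{n₁} = A · g^{n₁+1} + B · D(g^{n₁+1}), where D^[N] denotes the N-fold iterate of D. -/
/-!
The elements whose first `a` iterated derivatives lie in an ideal `I` form an ideal, the `a`-th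
differential power of `I`, and by the iterated Leibniz rule these multiply like ordinary powers.
For `I = (g, D g)` the element `g` lies in the second differential power, so `g ^ n₂` lies in the
`2 n₂`-th one: fewer than `2 n₂` derivatives keep it inside `(g, D g)`. Multiplication by `g ^ n₁`
then lands in `g ^ n₁ (g, D g)`, which is the ideal `(g ^ (n₁ + 1), D (g ^ (n₁ + 1)))` because
`D (g ^ (n₁ + 1)) = (n₁ + 1) g ^ n₁ D g` and `n₁ + 1` is invertible.
-/

section Derivation

open Finset

variable {S R : Type*} [CommSemiring S] [CommSemiring R] [Algebra S R]

theorem iterate_derivation_mul (D : Derivation S R R) (n : ℕ) (x y : R) :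
    D^[n] (x * y) = ∑ ij ∈ antidiagonal n, n.choose ij.1 • (D^[ij.1] x * D^[ij.2] y) := by
  induction n with
  | zero => simp
  | succ n ih =>
    rw [sum_antidiagonal_choose_succ_nsmul (fun i j ↦ D^[i] x * D^[j] y) n]
    simp only [Function.iterate_succ_apply', ih, map_sum, map_nsmul, Derivation.leibniz,
      smul_eq_mul, smul_add, sum_add_distrib]
    congr 1
    refine sum_congr rfl fun ⟨i, j⟩ hij ↦ ?_
    rw [n.choose_symm_of_eq_add (mem_antidiagonal.1 hij).symm, mul_comm]

theorem iterate_derivation_mul_mem (D : Derivation S R R) {I : Ideal R} {a b n : ℕ} {x y : R}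
    (hx : ∀ k < a, D^[k] x ∈ I) (hy : ∀ k < b, D^[k] y ∈ I) (hn : n < a + b) :
    D^[n] (x * y) ∈ I := by
  rw [iterate_derivation_mul]
  refine sum_mem fun ⟨i, j⟩ hij ↦ nsmul_mem ?_ _
  obtain hi | hj : i < a ∨ j < b := by
    have : i + j = n := mem_antidiagonal.1 hij
    omega
  · exact I.mul_mem_right _ (hx i hi)
  · exact I.mul_mem_left _ (hy j hj)

/-- The `a`-th differential power of the ideal `I` with respect to the single derivation `D`: the
elements `x` such that `x, D x, …, D^[a - 1] x` all lie in `I`. It measures how many times an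
element can be differentiated before leaving `I`. -/
def differentialPower (D : Derivation S R R) (I : Ideal R) (a : ℕ) : Ideal R where
  carrier := {x | ∀ k < a, D^[k] x ∈ I}
  zero_mem' k _ := by simp [iterate_map_zero]
  add_mem' hx hy k hk := by
    rw [iterate_map_add]
    exact I.add_mem (hx k hk) (hy k hk)
  smul_mem' c x hx k hk :=
    iterate_derivation_mul_mem D (a := 0) (by simp) hx (by rwa [zero_add])

theorem mem_differentialPower {D : Derivation S R R} {I : Ideal R} {a : ℕ} {x : R} :
    x ∈ differentialPower D I a ↔ ∀ k < a, D^[k] x ∈ I :=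
  Iff.rfl

theorem differentialPower_mul_le (D : Derivation S R R) (I : Ideal R) (a b : ℕ) :
    differentialPower D I a * differentialPower D I b ≤ differentialPower D I (a + b) :=
  Ideal.mul_le.2 fun _ hx _ hy _ hn ↦ iterate_derivation_mul_mem D hx hy hn

theorem differentialPower_pow_le (D : Derivation S R R) (I : Ideal R) (a n : ℕ) :
    differentialPower D I a ^ n ≤ differentialPower D I (a * n) := by
  induction n with
  | zero => exact fun x _ k hk ↦ absurd hk (by simp)
  | succ n ih =>
    rw [pow_succ, mul_add_one]
    exact (Ideal.mul_mono_left ih).trans (differentialPower_mul_le D I _ _)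

theorem mem_differentialPower_two_span_pair (D : Derivation S R R) (g : R) :
    g ∈ differentialPower D (Ideal.span {g, D g}) 2 := by
  intro k hk
  interval_cases k
  · exact Ideal.subset_span (by simp)
  · exact Ideal.subset_span (by simp)

theorem iterate_derivation_pow_mem_span_pair (D : Derivation S R R) (g : R) {n N : ℕ}
    (hN : N < 2 * n) : D^[N] (g ^ n) ∈ Ideal.span {g, D g} :=
  mem_differentialPower.1 (differentialPower_pow_le D _ 2 n
    (Ideal.pow_mem_pow (mem_differentialPower_two_span_pair D g) n)) N hN

theorem span_pow_succ_derivation (D : Derivation S R R) (g : R) {n : ℕ}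
    (hn : IsUnit (n + 1 : R)) :
    Ideal.span {g ^ (n + 1), D (g ^ (n + 1))} = Ideal.span {g, D g} * Ideal.span {g ^ n} := by
  have hD : D (g ^ (n + 1)) = (n + 1 : R) * (D g * g ^ n) := by
    simp [mul_comm (D g)]
  rw [hD, Ideal.span_insert, Ideal.span_singleton_mul_left_unit hn, Ideal.span_insert,
    Ideal.sup_mul, Ideal.span_singleton_mul_span_singleton,
    Ideal.span_singleton_mul_span_singleton, pow_succ']

theorem quasiparticle_same_color_relation_general (D : Derivation S R R) (g : R) {n₁ n₂ N : ℕ}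
    (hn₁ : IsUnit (n₁ + 1 : R)) (hN : N < 2 * n₂) :
    ∃ A B : R, D^[N] (g ^ n₂) * g ^ n₁ = A * g ^ (n₁ + 1) + B * D (g ^ (n₁ + 1)) := by
  have hmem : D^[N] (g ^ n₂) * g ^ n₁ ∈ Ideal.span {g ^ (n₁ + 1), D (g ^ (n₁ + 1))} := by
    rw [span_pow_succ_derivation D g hn₁]
    exact Ideal.mul_mem_mul (iterate_derivation_pow_mem_span_pair D g hN)
      (Ideal.mem_span_singleton_self _)
  obtain ⟨A, B, hAB⟩ := Ideal.mem_span_pair.1 hmem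
  exact ⟨A, B, hAB.symm⟩

end Derivation

/-- The bundled derivation given by an additive map satisfying the Leibniz rule. It is taken over
`ℤ`, where linearity is automatic. -/
def derivationOfLeibniz {R : Type*} [CommRing R] (D : R → R)
    (hadd : ∀ x y : R, D (x + y) = D x + D y)
    (hmul : ∀ x y : R, D (x * y) = D x * y + x * D y) : Derivation ℤ R R :=
  Derivation.mk' (AddMonoidHom.mk' D hadd).toIntLinearMap fun x y ↦
    (hmul x y).trans (by simp [add_comm, mul_comm])

theorem isUnit_natCast_add_one (R : Type*) [Semiring R] [Algebra ℚ R] (n : ℕ) :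
    IsUnit (n + 1 : R) := by
  simpa using (IsUnit.mk0 (n + 1 : ℚ) n.cast_add_one_ne_zero).map (algebraMap ℚ R)

/-- Let `R` be a commutative ring which is a `ℚ`-algebra, `D : R → R` a
derivation (an additive map satisfying the Leibniz rule), `g ∈ R`, and `n₁, n₂` positive
integers with `n₂ ≤ n₁`.  Then for every `N ≤ 2 n₂ - 1` there exist `A B : R` with
`D^[N] (g ^ n₂) * g ^ n₁ = A * g ^ (n₁ + 1) + B * D (g ^ (n₁ + 1))`. -/
theorem quasiparticle_same_color_relation
    (R : Type*) [CommRing R] [Algebra ℚ R]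
    (D : R → R)
    (hadd : ∀ x y : R, D (x + y) = D x + D y)
    (hmul : ∀ x y : R, D (x * y) = D x * y + x * D y)
    (g : R) (n₁ n₂ : ℕ) (hn₂ : 0 < n₂) (hle : n₂ ≤ n₁)
    (N : ℕ) (hN : N ≤ 2 * n₂ - 1) :
    ∃ A B : R, D^[N] (g ^ n₂) * g ^ n₁ = A * g ^ (n₁ + 1) + B * D (g ^ (n₁ + 1)) := by
  exact quasiparticle_same_color_relation_general (derivationOfLeibniz D hadd hmul) g
    (isUnit_natCast_add_one R n₁) (by omega)
end

section
/- Let R be a commutative ring, D : R → R a derivation (an additive map satisfying D(xy) = D(x)y + xD(y)), g ∈ R, and n a positive integer. Then for every natural number N with N ≤ 2n − 1, the element D^[N](g^n) lies in the ideal of R generated by g and D(g), where D^[N] denotes the N-fold iterate of D. -/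
/-!
By the general Leibniz rule, `D^[N] (x * y)` is a sum of multiples of the products
`D^[i] x * D^[j] y` with `i + j = N`. If `N < a + b`, each of these has `i < a` or `j < b`. So an
ideal containing `D^[i] x` for `i < a` and `D^[j] y` for `j < b` contains `D^[N] (x * y)` for
`N < a + b`, and one containing `D^[i] g` for `i < m` contains `D^[N] (g ^ n)` for `N < m * n`.
The ideal generated by `g` and `D g` is the case `m = 2`.
-/

open Finset

theorem iterate_mul_eq_sum_antidiagonal {R : Type*} [NonUnitalNonAssocSemiring R] (D : R →+ R)
    (hD : ∀ x y : R, D (x * y) = D x * y + x * D y) (N : ℕ) (x y : R) :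
    D^[N] (x * y) = ∑ ij ∈ antidiagonal N, N.choose ij.1 • (D^[ij.1] x * D^[ij.2] y) := by
  induction N with
  | zero => simp
  | succ N ih =>
    have choose_symm : ∀ ij ∈ antidiagonal N, N.choose ij.1 = N.choose ij.2 := fun _ hij ↦
      Nat.choose_symm_of_eq_add (mem_antidiagonal.mp hij).symm
    calc
      D^[N + 1] (x * y)
        = ∑ ij ∈ antidiagonal N, N.choose ij.1 • (D^[ij.1 + 1] x * D^[ij.2] y) +
            ∑ ij ∈ antidiagonal N, N.choose ij.1 • (D^[ij.1] x * D^[ij.2 + 1] y) := by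
          simp only [Function.iterate_succ_apply', ih, map_sum, map_nsmul, hD, nsmul_add,
            sum_add_distrib]
      _ = ∑ ij ∈ antidiagonal N, N.choose ij.1 • (D^[ij.1] x * D^[ij.2 + 1] y) +
            ∑ ij ∈ antidiagonal N, N.choose ij.2 • (D^[ij.1 + 1] x * D^[ij.2] y) := by
          rw [add_comm]
          exact congr_arg _ (sum_congr rfl fun ij hij ↦ by rw [choose_symm ij hij])
      _ = ∑ ij ∈ antidiagonal (N + 1), (N + 1).choose ij.1 • (D^[ij.1] x * D^[ij.2] y) :=
          (sum_antidiagonal_choose_succ_nsmul (fun i j ↦ D^[i] x * D^[j] y) N).symm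

section TwoSidedIdeal

variable {R : Type*} [Semiring R] (J : Ideal R) [J.IsTwoSided] (D : R →+ R)

theorem iterate_mul_mem_of_lt_add (hD : ∀ x y : R, D (x * y) = D x * y + x * D y)
    {x y : R} {a b : ℕ} (hx : ∀ i < a, D^[i] x ∈ J) (hy : ∀ j < b, D^[j] y ∈ J)
    {N : ℕ} (hN : N < a + b) : D^[N] (x * y) ∈ J := by
  rw [iterate_mul_eq_sum_antidiagonal D hD]
  refine sum_mem fun ij hij ↦ nsmul_mem ?_ _
  have hsum : ij.1 + ij.2 = N := mem_antidiagonal.mp hij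
  have pigeonhole : ij.1 < a ∨ ij.2 < b := by lia
  rcases pigeonhole with hi | hj
  · exact J.mul_mem_right _ (hx _ hi)
  · exact J.mul_mem_left _ (hy _ hj)

theorem iterated_derivative_pow_mem_ideal_general
    (hD : ∀ x y : R, D (x * y) = D x * y + x * D y)
    {g : R} {m : ℕ} (hg : ∀ i < m, D^[i] g ∈ J) {n N : ℕ} (hN : N < m * n) :
    D^[N] (g ^ n) ∈ J := by
  induction n generalizing N with
  | zero => simp at hN
  | succ n ih =>
    rw [pow_succ]
    exact iterate_mul_mem_of_lt_add J D hD (fun _ hi ↦ ih hi) hg hN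

end TwoSidedIdeal

/-- If `D : R → R` is a derivation on a commutative ring `R`, `g ∈ R` and
`n` is a positive integer, then for every `N ≤ 2 n - 1` the element `D^[N] (g ^ n)` lies in
the ideal generated by `g` and `D g`. -/
theorem iterated_derivative_pow_mem_ideal
    (R : Type*) [CommRing R]
    (D : R → R)
    (hadd : ∀ x y : R, D (x + y) = D x + D y)
    (hmul : ∀ x y : R, D (x * y) = D x * y + x * D y)
    (g : R) (n : ℕ) (hn : 0 < n)
    (N : ℕ) (hN : N ≤ 2 * n - 1) :
    D^[N] (g ^ n) ∈ Ideal.span ({g, D g} : Set R) := by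
  have hg : ∀ i < 2, D^[i] g ∈ Ideal.span ({g, D g} : Set R) :=
    fun i hi ↦ Ideal.subset_span (by interval_cases i <;> simp)
  exact iterated_derivative_pow_mem_ideal_general _ (AddMonoidHom.mk' D hadd) hmul hg (by lia)
end

section
/- Let R be a commutative ring, D : R → R a derivation (an additive map satisfying D(xy) = D(x)y + xD(y)), let g, h ∈ R, and let k be a positive integer such that g^i · h^j = 0 for all nonnegative integers i, j with i + j = k + 1. Let n₁, n₂ be positive integers with n₁ + n₂ ≥ k + 1. Then for every natural number N with N ≤ n₁ + n₂ − k − 1 one has D^[N](g^{n₂}) · h^{n₁} = 0, where D^[N] denotes the N-fold iterate of D. -/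
/-!
By the Leibniz rule, each application of `D` lowers the order of divisibility by `g` by at most
one, so `D^[N] (g ^ n₂)` is still divisible by `g ^ (n₂ - N)`. What remains is the product
`g ^ (n₂ - N) * h ^ n₁`, which vanishes because it has a factor `g ^ i * h ^ j` with
`i + j = k + 1`.
-/

theorem pow_mul_pow_eq_zero_of_le_add {M : Type*} [MonoidWithZero M] {a b : M} {m : ℕ}
    (hab : ∀ i j : ℕ, i + j = m → a ^ i * b ^ j = 0) {i j : ℕ} (hij : m ≤ i + j) :
    a ^ i * b ^ j = 0 := by
  obtain ⟨p, q, r, s, rfl, rfl, hqr⟩ : ∃ p q r s, i = p + q ∧ j = r + s ∧ q + r = m :=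
    ⟨i - min i m, min i m, m - min i m, j - (m - min i m), by omega, by omega, by omega⟩
  calc a ^ (p + q) * b ^ (r + s)
      = a ^ p * (a ^ q * b ^ r) * b ^ s := by simp only [pow_add, mul_assoc]
    _ = 0 := by rw [hab q r hqr, mul_zero, zero_mul]

section Leibniz

variable {R : Type*} [CommSemiring R] {D : R → R}

theorem pow_dvd_apply_of_leibniz (hmul : ∀ x y : R, D (x * y) = D x * y + x * D y)
    {g x : R} {n : ℕ} (hx : g ^ (n + 1) ∣ x) : g ^ n ∣ D x := by
  induction n generalizing x with
  | zero => simp only [pow_zero, one_dvd]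
  | succ n ih =>
    obtain ⟨c, rfl⟩ := hx
    have hc : g ^ (n + 1) ∣ g ^ (n + 1) * c := dvd_mul_right _ _
    have hleibniz : D (g ^ (n + 2) * c) = D g * (g ^ (n + 1) * c) + g * D (g ^ (n + 1) * c) := by
      rw [pow_succ' g (n + 1), mul_assoc, hmul]
    have hstep : g ^ (n + 1) ∣ g * D (g ^ (n + 1) * c) := by
      simpa only [pow_succ'] using mul_dvd_mul_left g (ih hc)
    rw [hleibniz]
    exact dvd_add (hc.mul_left (D g)) hstep

theorem pow_sub_dvd_iterate_of_leibniz (hmul : ∀ x y : R, D (x * y) = D x * y + x * D y)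
    {g x : R} {n : ℕ} (hx : g ^ n ∣ x) (N : ℕ) : g ^ (n - N) ∣ D^[N] x := by
  induction N generalizing n x with
  | zero => exact hx
  | succ N ih =>
    cases n with
    | zero => simp only [Nat.zero_sub, pow_zero, one_dvd]
    | succ n =>
      rw [Nat.add_sub_add_right, Function.iterate_succ_apply]
      exact ih (pow_dvd_apply_of_leibniz hmul hx)

theorem quasiparticle_different_color_relation_general
    (hmul : ∀ x y : R, D (x * y) = D x * y + x * D y) {g h : R} {k : ℕ}
    (hrel : ∀ i j : ℕ, i + j = k + 1 → g ^ i * h ^ j = 0)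
    {n₁ n₂ N : ℕ} (hN : N + (k + 1) ≤ n₁ + n₂) :
    D^[N] (g ^ n₂) * h ^ n₁ = 0 := by
  have hdvd : g ^ (n₂ - N) * h ^ n₁ ∣ D^[N] (g ^ n₂) * h ^ n₁ :=
    mul_dvd_mul_right (pow_sub_dvd_iterate_of_leibniz hmul dvd_rfl N) _
  have hzero : g ^ (n₂ - N) * h ^ n₁ = 0 := pow_mul_pow_eq_zero_of_le_add hrel (by omega)
  rwa [hzero, zero_dvd_iff] at hdvd

end Leibniz

/-- Let `D : R → R` be a derivation on a commutative ring `R`, let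
`g h ∈ R` and let `k` be a positive integer such that `g ^ i * h ^ j = 0` whenever
`i + j = k + 1`.  If `n₁, n₂` are positive with `n₁ + n₂ ≥ k + 1`, then for every
`N ≤ n₁ + n₂ - k - 1` one has `D^[N] (g ^ n₂) * h ^ n₁ = 0`. -/
theorem quasiparticle_different_color_relation
    (R : Type*) [CommRing R]
    (D : R → R)
    (hadd : ∀ x y : R, D (x + y) = D x + D y)
    (hmul : ∀ x y : R, D (x * y) = D x * y + x * D y)
    (g h : R) (k : ℕ) (hk : 0 < k)
    (hrel : ∀ i j : ℕ, i + j = k + 1 → g ^ i * h ^ j = 0)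
    (n₁ n₂ : ℕ) (hn₁ : 0 < n₁) (hn₂ : 0 < n₂) (hsum : k + 1 ≤ n₁ + n₂)
    (N : ℕ) (hN : N ≤ n₁ + n₂ - k - 1) :
    D^[N] (g ^ n₂) * h ^ n₁ = 0 :=
  quasiparticle_different_color_relation_general hmul hrel (by omega)
end

section
/- Fix integers k ≥ 1 and k₀, k₁, k₂ ≥ 0 with k₀ + k₁ + k₂ = k and k₀·k₂ = 0, and set d₁(n) = −min(n, k₀) − 2·max(n − k₀, 0) and d₂(n) = −min(n, k₀+k₁) − 2·max(n − k₀ − k₁, 0). Call a quasi-particle datum a pair of non-increasing integer sequences k ≥ n_{1,1} ≥ ⋯ ≥ n_{1,a} ≥ 1 and k ≥ n_{2,1} ≥ ⋯ ≥ n_{2,b} ≥ 1 together with integers m_{1,1}, …, m_{1,a}, m_{2,1}, …, m_{2,b} satisfying: (i) m_{i,s+1} ≤ m_{i,s} − 2n_{i,s} whenever n_{i,s+1} = n_{i,s} (i = 1, 2); (ii) m_{1,s} ≤ d₁(n_{1,s}) − 2(s−1)·n_{1,s}; (iii) m_{2,s} ≤ d₂(n_{2,s}) − 2(s−1)·n_{2,s}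 − ∑_{s'=1}^{a} max(0, n_{2,s} + n_{1,s'} − k); its charge is (∑_s n_{1,s}, ∑_s n_{2,s}) and its degree is −∑_s m_{1,s} − ∑_s m_{2,s}. Then for all nonnegative integers n₁, n₂, d, the number of quasi-particle data of charge (n₁, n₂) and degree d equals the sum, over all tuples of nonnegative integers (M_{i,c})_{i=1,2; c=1,…,k} with ∑_c c·M_{1,c} = n₁ and ∑_c c·M_{2,c} = n₂, of the number of 2k-tuples of partitions (λ^{(i,c)}) such that λ^{(i,c)} has at most M_{i,c} parts and ∑_{i,c} |λ^{(i,c)}| = d − E(M), where E(M) = ∑_{c,c'} min(c,c') M_{1,c} M_{1,c'} + ∑_{c,c'} max(0, c+c'−k) M_{1,c} M_{2,c'} + ∑_{c,c'} min(c,c') M_{2,c} M_{2,c'} + ∑_{c} max(0, c−k₀) M_{1,c} + ∑_{c} max(0, c−k₀−k₁) M_{2,c}. -/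
/-- Maximal degree `d_{max}(nγ₁, Λ) = -min(n,k₀) - 2·max(n-k₀,0)`. -/
def dmax1 (k₀ : ℕ) (n : ℕ) : ℤ :=
  -min (n : ℤ) (k₀ : ℤ) - 2 * max ((n : ℤ) - (k₀ : ℤ)) 0

/-- Maximal degree `d_{max}(nγ₂, Λ) = -min(n,k₀+k₁) - 2·max(n-k₀-k₁,0)`. -/
def dmax2 (k₀ k₁ : ℕ) (n : ℕ) : ℤ :=
  -min (n : ℤ) ((k₀ : ℤ) + (k₁ : ℤ)) - 2 * max ((n : ℤ) - (k₀ : ℤ) - (k₁ : ℤ)) 0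

/-- A quasi-particle datum: the charges and degrees of a quasi-particle basis monomial
of `𝔅_{W(Λ)}` for level `k` and `Λ` determined by `k₀, k₁` (and `k₂ = k - k₀ - k₁`). -/
structure QPDatum (k k₀ k₁ : ℕ) where
  a : ℕ
  b : ℕ
  n1 : Fin a → ℕ
  n2 : Fin b → ℕ
  m1 : Fin a → ℤ
  m2 : Fin b → ℤ
  n1_pos : ∀ s, 1 ≤ n1 s
  n1_le : ∀ s, n1 s ≤ k
  n1_anti : ∀ s t : Fin a, s ≤ t → n1 t ≤ n1 s
  n2_pos : ∀ s, 1 ≤ n2 s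
  n2_le : ∀ s, n2 s ≤ k
  n2_anti : ∀ s t : Fin b, s ≤ t → n2 t ≤ n2 s
  diff1 : ∀ (s : ℕ) (h : s + 1 < a), n1 ⟨s + 1, h⟩ = n1 ⟨s, Nat.lt_of_succ_lt h⟩ →
    m1 ⟨s + 1, h⟩ ≤ m1 ⟨s, Nat.lt_of_succ_lt h⟩ - 2 * (n1 ⟨s, Nat.lt_of_succ_lt h⟩ : ℤ)
  diff2 : ∀ (s : ℕ) (h : s + 1 < b), n2 ⟨s + 1, h⟩ = n2 ⟨s, Nat.lt_of_succ_lt h⟩ →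
    m2 ⟨s + 1, h⟩ ≤ m2 ⟨s, Nat.lt_of_succ_lt h⟩ - 2 * (n2 ⟨s, Nat.lt_of_succ_lt h⟩ : ℤ)
  init1 : ∀ s : Fin a, m1 s ≤ dmax1 k₀ (n1 s) - 2 * (s : ℕ) * (n1 s : ℤ)
  init2 : ∀ s : Fin b, m2 s ≤ dmax2 k₀ k₁ (n2 s) - 2 * (s : ℕ) * (n2 s : ℤ)
    - ∑ s' : Fin a, max 0 ((n2 s : ℤ) + (n1 s' : ℤ) - (k : ℤ))

/-- The charge of a quasi-particle datum: `(∑ n_{1,s}, ∑ n_{2,s})`. -/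
def QPDatum.charge {k k₀ k₁ : ℕ} (q : QPDatum k k₀ k₁) : ℕ × ℕ :=
  (∑ s : Fin q.a, q.n1 s, ∑ s : Fin q.b, q.n2 s)

/-- The degree of a quasi-particle datum: `-∑ m_{1,s} - ∑ m_{2,s}`. -/
def QPDatum.degree {k k₀ k₁ : ℕ} (q : QPDatum k k₀ k₁) : ℤ :=
  -(∑ s : Fin q.a, q.m1 s) - (∑ s : Fin q.b, q.m2 s)

/-- The exponent `E(M) = ᵗM Q^{(k)} M + L^{(k)}_Λ · M` of the fermionic formula, where
`M i j` is the number of quasi-particles of color `γ_{i+1}` and charge `j + 1`. -/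
def fermionicExponent (k k₀ k₁ : ℕ) (M : Fin 2 → Fin k → ℕ) : ℤ :=
  (∑ j : Fin k, ∑ j' : Fin k,
      ((min ((j : ℕ) + 1) ((j' : ℕ) + 1) : ℕ) : ℤ) * (M 0 j : ℤ) * (M 0 j' : ℤ))
  + (∑ j : Fin k, ∑ j' : Fin k,
      max 0 ((((j : ℕ) : ℤ) + 1) + (((j' : ℕ) : ℤ) + 1) - (k : ℤ))
        * (M 0 j : ℤ) * (M 1 j' : ℤ))
  + (∑ j : Fin k, ∑ j' : Fin k,
      ((min ((j : ℕ) + 1) ((j' : ℕ) + 1) : ℕ) : ℤ) * (M 1 j : ℤ) * (M 1 j' : ℤ))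
  + (∑ j : Fin k, max 0 ((((j : ℕ) : ℤ) + 1) - (k₀ : ℤ)) * (M 0 j : ℤ))
  + (∑ j : Fin k, max 0 ((((j : ℕ) : ℤ) + 1) - (k₀ : ℤ) - (k₁ : ℤ)) * (M 1 j : ℤ))

/-! Fix the charges of one colour. The differences between the upper bounds on the degrees `m_s`
and the `m_s` themselves are natural numbers, the *excesses*, and the difference conditions say
exactly that excesses do not decrease along a run of equal charges. So a one-colour datum is a
sequence of pairs (charge, excess) sorted lexicographically, that is, a multiset of pairs, that is,
one multiset of excesses for each charge `c`; the positive excesses form a partition with at most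
`M_c` parts, where `M_c` is the number of quasi-particles of charge `c`. The bounds contribute the
exponent: for non-increasing charges `∑_s (2s + 1) n_s = ∑_{s,t} min(n_s, n_t)` (counting `s` from
`0`), which is the quadratic form of one colour, and the interaction term in the bounds of the
second colour is the mixed form. Only the bounds of the second colour involve the first one, so the
two colours can be treated one after the other. -/

/-! ### Sorted tuples and multisets -/

theorem monotone_fin_of_le_succ {α : Type*} [Preorder α] {a : ℕ} {f : Fin a → α}
    (h : ∀ (s : ℕ) (hs : s + 1 < a), f ⟨s, Nat.lt_of_succ_lt hs⟩ ≤ f ⟨s + 1, hs⟩) :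
    Monotone f := by
  cases a with
  | zero => exact fun s => s.elim0
  | succ a => exact Fin.monotone_iff_le_succ.2 fun s => h s (Nat.succ_lt_succ s.2)

theorem sum_sum_min_eq_of_antitone {R : Type*} [AddCommMonoid R] [LinearOrder R] {a : ℕ}
    {n : Fin a → R} (hn : Antitone n) :
    ∑ s, ∑ t, min (n s) (n t) = ∑ s : Fin a, (2 * (s : ℕ) + 1) • n s := by
  induction a with
  | zero => simp
  | succ a ih =>
    have min_last (s : Fin a) : min (n s.castSucc) (n (Fin.last a)) = n (Fin.last a) :=
      min_eq_right (hn (Fin.le_last _))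
    have ih := ih (hn.comp_monotone Fin.strictMono_castSucc.monotone)
    simp only [Function.comp_apply] at ih
    simp only [Fin.sum_univ_castSucc, min_last, min_comm (n (Fin.last a)), min_self,
      Finset.sum_add_distrib, ih, Fin.val_castSucc, Fin.val_last]
    simp [add_smul, two_mul, add_assoc]

/-- Monotone tuples of arbitrary length correspond to multisets; the inverse sorts. -/
def monotoneTupleEquivMultiset (α : Type*) [LinearOrder α] :
    {f : Σ a : ℕ, Fin a → α // Monotone f.2} ≃ Multiset α where
  toFun f := List.ofFn f.1.2
  invFun x := ⟨List.equivSigmaTuple (x.sort (· ≤ ·)),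
    (x.pairwise_sort (· ≤ ·)).sortedLE.monotone_get⟩
  left_inv f := by
    have sort_ofFn : (List.ofFn f.1.2 : Multiset α).sort (· ≤ ·) = List.ofFn f.1.2 := by
      rw [Multiset.coe_sort]
      exact List.mergeSort_of_pairwise (by simpa using f.2.sortedLE_ofFn.pairwise)
    refine Subtype.ext ?_
    simp only [sort_ofFn]
    exact List.equivSigmaTuple.right_inv f.1
  right_inv x := by
    change ((List.equivSigmaTuple.symm (List.equivSigmaTuple _) : List α) : Multiset α) = x
    rw [Equiv.symm_apply_apply, Multiset.sort_eq]

section Fibers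

variable {α ι β : Type*} [DecidableEq ι]

/-- The multiset of second components of the elements with first component `i`, where elements of
`α` are read as pairs through `e`. -/
def multisetFiber (e : α ≃ ι × β) (i : ι) : Multiset α →+ Multiset β where
  toFun x := (x.filter fun y => (e y).1 = i).map fun y => (e y).2
  map_zero' := rfl
  map_add' := by simp

theorem multisetFiber_apply (e : α ≃ ι × β) (i : ι) (x : Multiset α) :
    multisetFiber e i x = (x.filter fun y => (e y).1 = i).map fun y => (e y).2 := rfl

theorem multisetFiber_cons (e : α ≃ ι × β) (i : ι) (y : α) (x : Multiset α) :
    multisetFiber e i (y ::ₘ x) =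
      (if (e y).1 = i then {(e y).2} else 0) + multisetFiber e i x := by
  by_cases h : (e y).1 = i <;> simp [multisetFiber_apply, h]

theorem multisetFiber_map_symm (e : α ≃ ι × β) (i j : ι) (x : Multiset β) :
    multisetFiber e i (x.map fun r => e.symm (j, r)) = if j = i then x else 0 := by
  by_cases h : j = i <;> simp [multisetFiber_apply, Multiset.filter_map, h]

variable [Fintype ι]

theorem sum_sum_map_multisetFiber {R : Type*} [AddCommMonoid R] (e : α ≃ ι × β) (x : Multiset α)
    (F : ι → β → R) :
    ∑ i, ((multisetFiber e i x).map (F i)).sum = (x.map fun y => F (e y).1 (e y).2).sum := by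
  induction x using Multiset.induction with
  | empty => simp
  | cons y x ih =>
    have sum_head (i : ι) : ((if (e y).1 = i then {(e y).2} else 0 : Multiset β).map (F i)).sum =
        if (e y).1 = i then F i (e y).2 else 0 := by
      split_ifs <;> simp
    simp [multisetFiber_cons, Finset.sum_add_distrib, ih, sum_head]

/-- A multiset of pairs is the same as the family of its fibers. -/
def multisetEquivFibers (e : α ≃ ι × β) : Multiset α ≃ (ι → Multiset β) where
  toFun x i := multisetFiber e i x
  invFun f := ∑ i, (f i).map fun r => e.symm (i, r)
  left_inv x := by
    induction x using Multiset.induction with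
    | empty => simp
    | cons y x ih =>
      have map_head (i : ι) : (if (e y).1 = i then {(e y).2} else 0 : Multiset β).map
          (fun r => e.symm (i, r)) = if (e y).1 = i then {y} else 0 := by
        split_ifs with h
        · simp [← h]
        · simp
      simp [multisetFiber_cons, Finset.sum_add_distrib, ih, map_head]
  right_inv f := by
    ext1 i
    simp [map_sum, multisetFiber_map_symm]

end Fibers

/-! ### Partitions with a bounded number of parts -/

theorem filter_pos_add_replicate_count_zero (x : Multiset ℕ) :
    x.filter (0 < ·) + Multiset.replicate (x.count 0) 0 = x := by
  simpa [Multiset.filter_eq'] using Multiset.filter_add_not (0 < ·) x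

theorem sum_filter_pos (x : Multiset ℕ) : (x.filter (0 < ·)).sum = x.sum := by
  simpa using congrArg Multiset.sum (filter_pos_add_replicate_count_zero x)

theorem filter_pos_add_zeros {p : Multiset ℕ} (hp : ∀ x ∈ p, 0 < x) (n : ℕ) :
    (p + Multiset.replicate n 0).filter (0 < ·) = p := by
  have no_positive_zero : (Multiset.replicate n 0).filter (0 < ·) = 0 :=
    Multiset.filter_eq_nil.2 fun x hx => by simp [Multiset.eq_of_mem_replicate hx]
  rw [Multiset.filter_add, Multiset.filter_eq_self.2 hp, no_positive_zero, add_zero]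

theorem filter_pos_add_replicate_card_sub (x : Multiset ℕ) :
    x.filter (0 < ·) + Multiset.replicate (x.card - (x.filter (0 < ·)).card) 0 = x := by
  have card_eq : (x.filter (0 < ·)).card + x.count 0 = x.card := by
    simpa using congrArg Multiset.card (filter_pos_add_replicate_count_zero x)
  rw [← card_eq, Nat.add_sub_cancel_left, filter_pos_add_replicate_count_zero]

/-- The pairs of a family of numbers `M` and a family of partitions (multisets of positive parts)
such that the partition of index `(i, j)` has at most `M i j` parts. -/
def BoundedPartitions (I J : Type*) : Type _ :=
  {MP : (I → J → ℕ) × (I → J → Multiset ℕ) //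
    (∀ i j, ∀ x ∈ MP.2 i j, 0 < x) ∧ ∀ i j, (MP.2 i j).card ≤ MP.1 i j}

/-- Omitting zeros; the cardinality records how many of them to restore. -/
def multisetsEquivBoundedPartitions (I J : Type*) :
    (I → J → Multiset ℕ) ≃ BoundedPartitions I J where
  toFun x := ⟨(fun i j => (x i j).card, fun i j => (x i j).filter (0 < ·)),
    fun _ _ _ h => (Multiset.mem_filter.1 h).2,
    fun _ _ => Multiset.card_le_card (Multiset.filter_le _ _)⟩
  invFun MP i j := MP.1.2 i j + Multiset.replicate (MP.1.1 i j - (MP.1.2 i j).card) 0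
  left_inv x := by
    ext1 i; ext1 j
    exact filter_pos_add_replicate_card_sub (x i j)
  right_inv := by
    rintro ⟨⟨M, P⟩, hpos, hcard⟩
    refine Subtype.ext (Prod.ext ?_ ?_) <;> ext1 i <;> ext1 j
    · simpa using Nat.add_sub_cancel' (hcard i j)
    · exact filter_pos_add_zeros (hpos i j) _

/-! ### Data of one colour -/

/-- A pair of a charge in `{1, …, k}`, stored as the charge minus one, and an excess. Such pairs are
ordered as along a datum: first by decreasing charge, then by increasing excess. -/
abbrev ChargeExcess (k : ℕ) : Type := (Fin k)ᵒᵈ ×ₗ ℕ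

namespace ChargeExcess

variable {k : ℕ}

/-- Forgetting the order. -/
def equivProd (k : ℕ) : ChargeExcess k ≃ Fin k × ℕ :=
  ofLex.trans (OrderDual.ofDual.prodCongr (Equiv.refl ℕ))

/-- The charge, as a number in `{1, …, k}`. -/
def charge (x : ChargeExcess k) : ℕ := (equivProd k x).1 + 1

/-- The excess component. -/
def excess (x : ChargeExcess k) : ℕ := (equivProd k x).2

theorem le_iff {x y : ChargeExcess k} :
    x ≤ y ↔ y.charge < x.charge ∨ x.charge = y.charge ∧ x.excess ≤ y.excess := by
  rw [Prod.Lex.le_iff, charge, charge, Nat.add_lt_add_iff_right, Nat.add_right_cancel_iff,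
    Fin.val_inj]
  rfl

theorem charge_le (x : ChargeExcess k) : x.charge ≤ k := (equivProd k x).1.2

end ChargeExcess

/-- The quasi-particles of one colour, with charges `n s` and degrees `m s`, where `g` is the upper
bound on the degrees before the shift by `2 * s * n s`. -/
structure OneColourDatum (k : ℕ) (g : ℕ → ℤ) where
  a : ℕ
  n : Fin a → ℕ
  m : Fin a → ℤ
  n_pos : ∀ s, 1 ≤ n s
  n_le : ∀ s, n s ≤ k
  n_anti : Antitone n
  diff : ∀ (s : ℕ) (h : s + 1 < a), n ⟨s + 1, h⟩ = n ⟨s, Nat.lt_of_succ_lt h⟩ →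
    m ⟨s + 1, h⟩ ≤ m ⟨s, Nat.lt_of_succ_lt h⟩ - 2 * (n ⟨s, Nat.lt_of_succ_lt h⟩ : ℤ)
  m_le : ∀ s : Fin a, m s ≤ g (n s) - 2 * (s : ℕ) * (n s : ℤ)

namespace OneColourDatum

variable {k : ℕ} {g : ℕ → ℤ}

/-- The charge and the excess of the `s`-th quasi-particle, the excess being the amount by which its
degree falls short of the upper bound. -/
def chargeExcess (q : OneColourDatum k g) (s : Fin q.a) : ChargeExcess k :=
  (ChargeExcess.equivProd k).symm
    (⟨q.n s - 1, by have := q.n_pos s; have := q.n_le s; omega⟩,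
      (g (q.n s) - 2 * (s : ℕ) * (q.n s : ℤ) - q.m s).toNat)

theorem charge_chargeExcess (q : OneColourDatum k g) (s : Fin q.a) :
    (q.chargeExcess s).charge = q.n s := by
  simp [chargeExcess, ChargeExcess.charge, q.n_pos s]

theorem excess_chargeExcess (q : OneColourDatum k g) (s : Fin q.a) :
    ((q.chargeExcess s).excess : ℤ) = g (q.n s) - 2 * (s : ℕ) * (q.n s : ℤ) - q.m s := by
  simpa [chargeExcess, ChargeExcess.excess] using q.m_le s

theorem monotone_chargeExcess (q : OneColourDatum k g) : Monotone q.chargeExcess := by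
  refine monotone_fin_of_le_succ fun s hs => ChargeExcess.le_iff.2 ?_
  simp only [charge_chargeExcess]
  have n_succ_le : q.n ⟨s + 1, hs⟩ ≤ q.n ⟨s, Nat.lt_of_succ_lt hs⟩ :=
    q.n_anti (Fin.mk_le_mk.2 s.le_succ)
  refine n_succ_le.lt_or_eq.imp_right fun n_eq => ⟨n_eq.symm, ?_⟩
  have excess_s := q.excess_chargeExcess ⟨s, Nat.lt_of_succ_lt hs⟩
  have excess_succ := q.excess_chargeExcess ⟨s + 1, hs⟩
  have m_diff := q.diff s hs n_eq
  rw [n_eq] at excess_succ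
  push_cast at excess_succ
  rw [← Int.ofNat_le]
  linarith

/-- The datum with given charges and excesses. -/
def ofChargeExcess {a : ℕ} (x : Fin a → ChargeExcess k) (hx : Monotone x) :
    OneColourDatum k g where
  a := a
  n s := (x s).charge
  m s := g (x s).charge - 2 * (s : ℕ) * ((x s).charge : ℤ) - (x s).excess
  n_pos _ := Nat.le_add_left _ _
  n_le s := (x s).charge_le
  n_anti _ _ hst := (ChargeExcess.le_iff.1 (hx hst)).elim le_of_lt fun h => h.1.ge
  diff s hs charge_eq := by
    have excess_le : (x ⟨s, Nat.lt_of_succ_lt hs⟩).excess ≤ (x ⟨s + 1, hs⟩).excess :=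
      ((ChargeExcess.le_iff.1 (hx (Fin.mk_le_mk.2 s.le_succ))).resolve_left charge_eq.not_lt).2
    rw [charge_eq]
    push_cast
    linarith [Int.ofNat_le.2 excess_le]
  m_le _ := sub_le_self _ (Int.natCast_nonneg _)

/-- The difference conditions say exactly that the sequence of charges and excesses is sorted. -/
def equivMonotoneTuple (k : ℕ) (g : ℕ → ℤ) :
    OneColourDatum k g ≃ {x : Σ a : ℕ, Fin a → ChargeExcess k // Monotone x.2} where
  toFun q := ⟨⟨q.a, q.chargeExcess⟩, q.monotone_chargeExcess⟩
  invFun x := ofChargeExcess x.1.2 x.2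
  left_inv q := by
    simp [ofChargeExcess, charge_chargeExcess, excess_chargeExcess]
  right_inv := by
    rintro ⟨⟨a, x⟩, hx⟩
    have chargeExcess_eq : (ofChargeExcess x hx : OneColourDatum k g).chargeExcess = x := by
      ext1 s
      apply (ChargeExcess.equivProd k).injective
      ext <;> simp [chargeExcess, ofChargeExcess, ChargeExcess.charge, ChargeExcess.excess]
    exact Subtype.ext (congrArg (Sigma.mk a) chargeExcess_eq)

/-- A one-colour datum is determined by the multisets of excesses of its quasi-particles of each
charge; the entry `j` belongs to the charge `j + 1`. -/
def equivExcesses (k : ℕ) (g : ℕ → ℤ) : OneColourDatum k g ≃ (Fin k → Multiset ℕ) :=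
  (equivMonotoneTuple k g).trans <| (monotoneTupleEquivMultiset _).trans <|
    multisetEquivFibers (ChargeExcess.equivProd k)

/-- The excesses of the quasi-particles of charge `j + 1`. -/
abbrev excesses (q : OneColourDatum k g) : Fin k → Multiset ℕ := equivExcesses k g q

theorem sum_chargeExcess {R : Type*} [AddCommMonoid R] (q : OneColourDatum k g)
    (F : Fin k → ℕ → R) :
    ∑ s, F (ChargeExcess.equivProd k (q.chargeExcess s)).1 (q.chargeExcess s).excess =
      ∑ j, ((q.excesses j).map (F j)).sum := by
  refine .trans ?_ (sum_sum_map_multisetFiber (ChargeExcess.equivProd k)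
    (List.ofFn q.chargeExcess : Multiset (ChargeExcess k)) F).symm
  rw [Multiset.map_coe, Multiset.sum_coe, List.map_ofFn, List.sum_ofFn]
  rfl

theorem sum_n {R : Type*} [AddCommMonoid R] (q : OneColourDatum k g) (f : ℕ → R) :
    ∑ s, f (q.n s) = ∑ j : Fin k, (q.excesses j).card • f (j + 1) := by
  have := q.sum_chargeExcess fun j _ => f (j + 1)
  simpa only [← charge_chargeExcess, ChargeExcess.charge, Multiset.map_const',
    Multiset.sum_replicate]

theorem sum_excess (q : OneColourDatum k g) :
    ∑ s, (q.chargeExcess s).excess = ∑ j, (q.excesses j).sum := by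
  simpa using q.sum_chargeExcess fun _ r => r

theorem sum_sum_min_n (q : OneColourDatum k g) :
    ∑ s, ∑ t, min (q.n s) (q.n t) =
      ∑ j : Fin k, ∑ j' : Fin k,
        min ((j : ℕ) + 1) (j' + 1) * (q.excesses j).card * (q.excesses j').card := by
  rw [q.sum_n fun n => ∑ t, min n (q.n t)]
  refine Finset.sum_congr rfl fun j _ => ?_
  rw [q.sum_n fun n => min ((j : ℕ) + 1) n, smul_eq_mul, Finset.mul_sum]
  refine Finset.sum_congr rfl fun j' _ => ?_
  rw [smul_eq_mul]
  ring

theorem neg_sum_m (q : OneColourDatum k g) :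
    -∑ s, q.m s = ∑ s, ((q.chargeExcess s).excess : ℤ) +
      ((∑ s, ∑ t, min (q.n s) (q.n t) : ℕ) : ℤ) + ∑ s, (-g (q.n s) - q.n s) := by
  rw [sum_sum_min_eq_of_antitone q.n_anti]
  push_cast
  simp only [excess_chargeExcess, smul_eq_mul, ← Finset.sum_add_distrib, ← Finset.sum_neg_distrib]
  refine Finset.sum_congr rfl fun s _ => ?_
  push_cast
  ring

end OneColourDatum

/-! ### Data of two colours -/

theorem neg_dmax1_sub (k₀ n : ℕ) : -dmax1 k₀ n - n = max 0 ((n : ℤ) - k₀) := by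
  rw [dmax1]
  omega

theorem neg_dmax2_sub (k₀ k₁ n : ℕ) : -dmax2 k₀ k₁ n - n = max 0 ((n : ℤ) - k₀ - k₁) := by
  rw [dmax2]
  omega

/-- The upper bound, before the shift by `2 * s * n`, on the degree of a quasi-particle of the
second colour of charge `n`, where `n₁` lists the charges of the first colour. -/
def secondColourBound (k k₀ k₁ : ℕ) {a : ℕ} (n₁ : Fin a → ℕ) (n : ℕ) : ℤ :=
  dmax2 k₀ k₁ n - ∑ s : Fin a, max 0 ((n : ℤ) + n₁ s - k)

theorem neg_secondColourBound_sub (k k₀ k₁ : ℕ) {a : ℕ} (n₁ : Fin a → ℕ) (n : ℕ) :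
    -secondColourBound k k₀ k₁ n₁ n - n =
      max 0 ((n : ℤ) - k₀ - k₁) + ∑ s, max 0 ((n₁ s : ℤ) + n - k) := by
  simp only [← neg_dmax2_sub, secondColourBound, add_comm (n : ℤ)]
  ring

/-- The charge of a datum with `M i j` quasi-particles of colour `i + 1` and charge `j + 1`. -/
def fermionicCharge {k : ℕ} (M : Fin 2 → Fin k → ℕ) : ℕ × ℕ :=
  (∑ j : Fin k, ((j : ℕ) + 1) * M 0 j, ∑ j : Fin k, ((j : ℕ) + 1) * M 1 j)

/-- The power of `q` contributed by a pair `(M, P)` to the fermionic formula, when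
`∏ 1 / (q)_{M i j}` is expanded as a sum over partitions `P i j`. -/
def fermionicDegree {k : ℕ} (k₀ k₁ : ℕ)
    (MP : (Fin 2 → Fin k → ℕ) × (Fin 2 → Fin k → Multiset ℕ)) : ℤ :=
  ∑ i, ∑ j, ((MP.2 i j).sum : ℤ) + fermionicExponent k k₀ k₁ MP.1

namespace QPDatum

variable {k k₀ k₁ : ℕ}

/-- The quasi-particles of the first colour. -/
def firstColour (q : QPDatum k k₀ k₁) : OneColourDatum k (dmax1 k₀) where
  a := q.a
  n := q.n1
  m := q.m1
  n_pos := q.n1_pos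
  n_le := q.n1_le
  n_anti := q.n1_anti
  diff := q.diff1
  m_le := q.init1

/-- The quasi-particles of the second colour. -/
def secondColour (q : QPDatum k k₀ k₁) :
    OneColourDatum k (secondColourBound k k₀ k₁ q.firstColour.n) where
  a := q.b
  n := q.n2
  m := q.m2
  n_pos := q.n2_pos
  n_le := q.n2_le
  n_anti := q.n2_anti
  diff := q.diff2
  m_le s := (q.init2 s).trans_eq (sub_right_comm _ _ _)

/-- A datum is a datum of the first colour together with a datum of the second colour whose bounds
depend on the former. -/
def equivColours (k k₀ k₁ : ℕ) : QPDatum k k₀ k₁ ≃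
    Σ q₁ : OneColourDatum k (dmax1 k₀), OneColourDatum k (secondColourBound k k₀ k₁ q₁.n) where
  toFun q := ⟨q.firstColour, q.secondColour⟩
  invFun q :=
    { a := q.1.a
      b := q.2.a
      n1 := q.1.n
      n2 := q.2.n
      m1 := q.1.m
      m2 := q.2.m
      n1_pos := q.1.n_pos
      n1_le := q.1.n_le
      n1_anti := q.1.n_anti
      n2_pos := q.2.n_pos
      n2_le := q.2.n_le
      n2_anti := q.2.n_anti
      diff1 := q.1.diff
      diff2 := q.2.diff
      init1 := q.1.m_le
      init2 := fun s => (q.2.m_le s).trans_eq (sub_right_comm _ _ _) }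
  left_inv _ := rfl
  right_inv _ := rfl

/-- A datum is determined by the multisets of excesses of its quasi-particles of each colour and
charge; the entry `i j` belongs to the colour `i + 1` and the charge `j + 1`. -/
def equivExcesses (k k₀ k₁ : ℕ) : QPDatum k k₀ k₁ ≃ (Fin 2 → Fin k → Multiset ℕ) :=
  calc
    QPDatum k k₀ k₁ ≃ Σ q₁ : OneColourDatum k (dmax1 k₀),
        OneColourDatum k (secondColourBound k k₀ k₁ q₁.n) := equivColours k k₀ k₁
    _ ≃ Σ _ : OneColourDatum k (dmax1 k₀), Fin k → Multiset ℕ :=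
      Equiv.sigmaCongrRight fun _ => OneColourDatum.equivExcesses k _
    _ ≃ OneColourDatum k (dmax1 k₀) × (Fin k → Multiset ℕ) := Equiv.sigmaEquivProd _ _
    _ ≃ (Fin k → Multiset ℕ) × (Fin k → Multiset ℕ) :=
      (OneColourDatum.equivExcesses k _).prodCongr (Equiv.refl _)
    _ ≃ (Fin 2 → Fin k → Multiset ℕ) := (finTwoArrowEquiv _).symm

/-- The excesses of the quasi-particles of colour `i + 1` and charge `j + 1`. -/
abbrev excesses (q : QPDatum k k₀ k₁) : Fin 2 → Fin k → Multiset ℕ := equivExcesses k k₀ k₁ q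

theorem excesses_zero (q : QPDatum k k₀ k₁) : q.excesses 0 = q.firstColour.excesses := rfl

theorem excesses_one (q : QPDatum k k₀ k₁) : q.excesses 1 = q.secondColour.excesses := rfl

theorem charge_eq (q : QPDatum k k₀ k₁) :
    q.charge = fermionicCharge fun i j => (q.excesses i j).card := by
  simp only [fermionicCharge, mul_comm (_ + 1)]
  exact Prod.ext (q.firstColour.sum_n id) (q.secondColour.sum_n id)

theorem sum_neg_dmax1_sub (q : QPDatum k k₀ k₁) :
    ∑ s, (-dmax1 k₀ (q.firstColour.n s) - q.firstColour.n s) =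
      ∑ j : Fin k, max 0 (((j : ℕ) : ℤ) + 1 - k₀) * (q.excesses 0 j).card := by
  simp only [neg_dmax1_sub]
  rw [q.firstColour.sum_n fun n => max 0 ((n : ℤ) - k₀)]
  simp [excesses_zero, mul_comm]

theorem sum_neg_secondColourBound_sub (q : QPDatum k k₀ k₁) :
    ∑ s, (-secondColourBound k k₀ k₁ q.firstColour.n (q.secondColour.n s) - q.secondColour.n s) =
      ∑ j : Fin k, max 0 (((j : ℕ) : ℤ) + 1 - k₀ - k₁) * (q.excesses 1 j).card +
        ∑ j : Fin k, ∑ j' : Fin k, max 0 (((j : ℕ) : ℤ) + 1 + (((j' : ℕ) : ℤ) + 1) - k) *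
          (q.excesses 0 j).card * (q.excesses 1 j').card := by
  simp only [neg_secondColourBound_sub, Finset.sum_add_distrib]
  congr 1
  · rw [q.secondColour.sum_n fun n => max 0 ((n : ℤ) - k₀ - k₁)]
    simp [excesses_one, mul_comm]
  · rw [Finset.sum_comm, q.firstColour.sum_n fun n₁ =>
      ∑ s, max 0 ((n₁ : ℤ) + q.secondColour.n s - k)]
    refine Finset.sum_congr rfl fun j _ => ?_
    rw [q.secondColour.sum_n fun n => max 0 ((((j : ℕ) + 1 : ℕ) : ℤ) + n - k), Finset.smul_sum]
    refine Finset.sum_congr rfl fun j' _ => ?_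
    simp only [excesses_zero, excesses_one, nsmul_eq_mul, Nat.cast_add, Nat.cast_one]
    ring

theorem degree_eq (q : QPDatum k k₀ k₁) :
    q.degree = ∑ i, ∑ j, ((q.excesses i j).sum : ℤ) +
      fermionicExponent k k₀ k₁ fun i j => (q.excesses i j).card := by
  have degree_eq_colours : q.degree = -∑ s, q.firstColour.m s + -∑ s, q.secondColour.m s :=
    sub_eq_add_neg _ _
  simp only [degree_eq_colours, OneColourDatum.neg_sum_m, sum_neg_dmax1_sub,
    sum_neg_secondColourBound_sub, OneColourDatum.sum_sum_min_n, ← Nat.cast_sum,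
    OneColourDatum.sum_excess, Fin.sum_univ_two, fermionicExponent, excesses_zero, excesses_one]
  push_cast
  ring

/-- The bijection behind the fermionic formula: a datum is sent to the numbers of its
quasi-particles of each colour and charge, and to the partitions formed by their positive
excesses. -/
def equivBoundedPartitions (k k₀ k₁ : ℕ) :
    QPDatum k k₀ k₁ ≃ BoundedPartitions (Fin 2) (Fin k) :=
  (equivExcesses k k₀ k₁).trans (multisetsEquivBoundedPartitions _ _)

theorem fermionicCharge_equivBoundedPartitions (q : QPDatum k k₀ k₁) :
    fermionicCharge (equivBoundedPartitions k k₀ k₁ q).1.1 = q.charge :=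
  q.charge_eq.symm

theorem fermionicDegree_equivBoundedPartitions (q : QPDatum k k₀ k₁) :
    fermionicDegree k₀ k₁ (equivBoundedPartitions k k₀ k₁ q).1 = q.degree := by
  have sum_eq (i : Fin 2) (j : Fin k) :
      ((equivBoundedPartitions k k₀ k₁ q).1.2 i j).sum = (q.excesses i j).sum :=
    sum_filter_pos _
  simp only [degree_eq, fermionicDegree, sum_eq]
  rfl

end QPDatum

theorem count_quasiparticle_data_fermionic_general (k k₀ k₁ n₁ n₂ : ℕ) (d : ℤ) :
    Nat.card {q : QPDatum k k₀ k₁ // q.charge = (n₁, n₂) ∧ q.degree = d}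
    = Nat.card {MP : (Fin 2 → Fin k → ℕ) × (Fin 2 → Fin k → Multiset ℕ) //
        (∑ j : Fin k, ((j : ℕ) + 1) * MP.1 0 j = n₁) ∧
        (∑ j : Fin k, ((j : ℕ) + 1) * MP.1 1 j = n₂) ∧
        (∀ i j, ∀ x ∈ MP.2 i j, 0 < x) ∧
        (∀ i j, Multiset.card (MP.2 i j) ≤ MP.1 i j) ∧
        (∑ i : Fin 2, ∑ j : Fin k, ((MP.2 i j).sum : ℤ))
          = d - fermionicExponent k k₀ k₁ MP.1} := by
  have e : {q : QPDatum k k₀ k₁ // q.charge = (n₁, n₂) ∧ q.degree = d} ≃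
      {x : BoundedPartitions (Fin 2) (Fin k) //
        fermionicCharge x.1.1 = (n₁, n₂) ∧ fermionicDegree k₀ k₁ x.1 = d} :=
    (QPDatum.equivBoundedPartitions k k₀ k₁).subtypeEquiv fun q => by
      rw [q.fermionicCharge_equivBoundedPartitions, q.fermionicDegree_equivBoundedPartitions]
  refine Nat.card_congr (e.trans ((Equiv.subtypeSubtypeEquivSubtypeInter _ fun MP =>
    fermionicCharge MP.1 = (n₁, n₂) ∧ fermionicDegree k₀ k₁ MP = d).trans
      (Equiv.subtypeEquivRight fun MP => ?_)))
  rw [fermionicCharge, fermionicDegree, Prod.mk.injEq, eq_sub_iff_add_eq]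
  tauto

/-- The fermionic formula for quasi-particle data: the number of
quasi-particle data of charge `(n₁, n₂)` and degree `d` equals the sum over charge
contents `M` of the number of `2k`-tuples of partitions of total size `d - E(M)` with
`λ^{(i,c)}` having at most `M_{i,c}` parts. -/
theorem count_quasiparticle_data_fermionic
    (k k₀ k₁ k₂ : ℕ) (hk : 1 ≤ k) (hsum : k₀ + k₁ + k₂ = k) (hmin : k₀ * k₂ = 0)
    (n₁ n₂ d : ℕ) :
    Nat.card {q : QPDatum k k₀ k₁ // q.charge = (n₁, n₂) ∧ q.degree = (d : ℤ)}
    = Nat.card {MP : (Fin 2 → Fin k → ℕ) × (Fin 2 → Fin k → Multiset ℕ) //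
        (∑ j : Fin k, ((j : ℕ) + 1) * MP.1 0 j = n₁) ∧
        (∑ j : Fin k, ((j : ℕ) + 1) * MP.1 1 j = n₂) ∧
        (∀ i j, ∀ x ∈ MP.2 i j, 0 < x) ∧
        (∀ i j, Multiset.card (MP.2 i j) ≤ MP.1 i j) ∧
        (∑ i : Fin 2, ∑ j : Fin k, ((MP.2 i j).sum : ℤ))
          = (d : ℤ) - fermionicExponent k k₀ k₁ MP.1} :=
  count_quasiparticle_data_fermionic_general k k₀ k₁ n₁ n₂ d
end
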